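/- Let 0 < x < 2 and 0 < y < 2, and set a = xy(2 − x)/4, b = y(x + 1) − (2 − x)(1 − xy/4), c = xy. Assume that b + xy·√(2 − x) < 0. Then b² − 4ac > 0; the two roots z₁ = (−b − √(b² − 4ac))/(2a) and z₂ = (−b + √(b² − 4ac))/(2a) satisfy 0 < z₁ < z₂; and for every real z, a·z² + b·z + c ≤ 0 if and only if z₁ ≤ z ≤ z₂. -/

import Mathlib

/-! Since `4ac = (xy)²(2 - x)`, the assumption `b + xy√(2 - x) < 0` says precisely that
`√(4ac) < -b`. Hence `b < 0` and the discriminant is positive; it is smaller than `b²` because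
`ac > 0`, so its square root cannot outweigh `-b` in the smaller root. -/

section Field

variable {K : Type*} [Field K] {a b c s : K}

lemma quadratic_eq_mul_sub_mul_sub [NeZero (2 : K)] (ha : a ≠ 0) (h : discrim a b c = s ^ 2)
    (z : K) :
    a * z ^ 2 + b * z + c = a * ((z - (-b - s) / (2 * a)) * (z - (-b + s) / (2 * a))) := by
  rw [discrim] at h
  field_simp
  linear_combination -h

variable [LinearOrder K] [IsStrictOrderedRing K]

lemma quadratic_nonpos_iff (ha : 0 < a) (hs : 0 ≤ s) (h : discrim a b c = s ^ 2) (z : K) :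
    a * z ^ 2 + b * z + c ≤ 0 ↔ (-b - s) / (2 * a) ≤ z ∧ z ≤ (-b + s) / (2 * a) := by
  have roots_le : (-b - s) / (2 * a) ≤ (-b + s) / (2 * a) := by
    gcongr
    linarith
  rw [quadratic_eq_mul_sub_mul_sub ha.ne' h, ← smul_eq_mul,
    smul_nonpos_iff_nonpos_of_pos_left ha, sub_mul_sub_nonpos_iff z roots_le]

lemma quadratic_smaller_root_pos (ha : 0 < a) (hb : b < 0) (hc : 0 < c)
    (h : discrim a b c = s ^ 2) : 0 < (-b - s) / (2 * a) := by
  have sq_lt : s ^ 2 < (-b) ^ 2 := by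
    rw [← h, discrim, neg_sq]
    exact sub_lt_self _ (by positivity)
  have s_lt : s < -b := lt_of_pow_lt_pow_left₀ 2 (neg_nonneg.2 hb.le) sq_lt
  exact div_pos (sub_pos.2 s_lt) (by positivity)

end Field

lemma discrim_pos_iff_sqrt_lt_neg {a b c : ℝ} (hb : b < 0) :
    0 < discrim a b c ↔ √(4 * a * c) < -b := by
  rw [Real.sqrt_lt' (neg_pos.2 hb), neg_sq, discrim, sub_pos]

/-- Analysis of the quadratic inequality (in `z = ξ − 1`) arising in the
increasing-pressure case. -/
theorem stmt19 (x y a b c : ℝ) (hx : 0 < x) (hx2 : x < 2) (hy : 0 < y) (hy2 : y < 2)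
    (ha : a = x * y * (2 - x) / 4)
    (hb : b = y * (x + 1) - (2 - x) * (1 - x * y / 4))
    (hc : c = x * y)
    (hdom : b + x * y * Real.sqrt (2 - x) < 0) :
    0 < b ^ 2 - 4 * a * c ∧
    (let z₁ := (-b - Real.sqrt (b ^ 2 - 4 * a * c)) / (2 * a)
     let z₂ := (-b + Real.sqrt (b ^ 2 - 4 * a * c)) / (2 * a)
     0 < z₁ ∧ z₁ < z₂ ∧ ∀ z : ℝ, a * z ^ 2 + b * z + c ≤ 0 ↔ z₁ ≤ z ∧ z ≤ z₂) := by
  have hxy : 0 < x * y := mul_pos hx hy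
  have ha_pos : 0 < a := ha ▸ div_pos (mul_pos hxy (sub_pos.2 hx2)) four_pos
  have hc_pos : 0 < c := hc ▸ hxy
  have sqrt_eq : √(4 * a * c) = x * y * √(2 - x) := by
    rw [show 4 * a * c = (x * y) ^ 2 * (2 - x) by rw [ha, hc]; ring,
      Real.sqrt_mul (sq_nonneg _), Real.sqrt_sq hxy.le]
  have sqrt_lt : √(4 * a * c) < -b := by linarith
  have hb_neg : b < 0 := neg_pos.1 ((Real.sqrt_nonneg _).trans_lt sqrt_lt)
  have discrim_pos : 0 < discrim a b c := (discrim_pos_iff_sqrt_lt_neg hb_neg).2 sqrt_lt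
  have discrim_eq : discrim a b c = √(discrim a b c) ^ 2 := (Real.sq_sqrt discrim_pos.le).symm
  have sqrt_pos : 0 < √(discrim a b c) := Real.sqrt_pos.2 discrim_pos
  have roots_lt : (-b - √(discrim a b c)) / (2 * a) < (-b + √(discrim a b c)) / (2 * a) := by
    gcongr
    linarith
  exact ⟨discrim_pos, quadratic_smaller_root_pos ha_pos hb_neg hc_pos discrim_eq, roots_lt,
    quadratic_nonpos_iff ha_pos sqrt_pos.le discrim_eq⟩
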